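/- (Calderón–Vaillancourt theorem, Weyl quantization form.) Let a : ℝ^{2n} → ℂ be a smooth function such that every partial derivative ∂^α a (α ∈ ℕ^{2n}, including α = 0) is bounded on ℝ^{2n}. Then there exists a constant C > 0 such that for all Schwartz functions u, v ∈ S(ℝⁿ, ℂ), |∫_{ℝ^{2n}} a(x,ξ) · W(u,v)(x,ξ) dx dξ| ≤ C · ‖u‖_{L²(ℝⁿ)} · ‖v‖_{L²(ℝⁿ)}; that is, the Weyl operator Op(a) extends to a bounded linear operator on L²(ℝⁿ). -/

import Mathlib

open MeasureTheory

noncomputable section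

/-- Euclidean scalar product on `ℝⁿ`. -/
def dotn {n : ℕ} (p q : Fin n → ℝ) : ℝ := ∑ i, p i * q i

/-- The standard basis vector of `ℝ^{2n} = ℝⁿ × ℝⁿ` indexed by `i : Fin n ⊕ Fin n`. -/
def stdVec {n : ℕ} (i : Fin n ⊕ Fin n) : (Fin n → ℝ) × (Fin n → ℝ) :=
  Sum.elim (fun j => (Pi.single j 1, 0)) (fun j => (0, Pi.single j 1)) i

/-- The partial derivative of `f : ℝ^{2n} → ℂ` in the `i`-th coordinate direction. -/
def pDeriv {n : ℕ} (i : Fin n ⊕ Fin n)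
    (f : (Fin n → ℝ) × (Fin n → ℝ) → ℂ) : (Fin n → ℝ) × (Fin n → ℝ) → ℂ :=
  fun z => fderiv ℝ f z (stdVec i)

/-- The iterated partial derivative `∂^α f` given by a list of coordinate
directions (`L = []` gives `f` itself). -/
def pDerivList {n : ℕ} (L : List (Fin n ⊕ Fin n))
    (f : (Fin n → ℝ) × (Fin n → ℝ) → ℂ) : (Fin n → ℝ) × (Fin n → ℝ) → ℂ :=
  L.foldr (fun i g => pDeriv i g) f

/-- The Wigner transform
`W(u,v)(x,ξ) = (2π)^{−n} ∫ u(x+y/2) conj(v(x−y/2)) e^{−i(y|ξ)} dy`. -/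
def wigner {n : ℕ} (u v : SchwartzMap (Fin n → ℝ) ℂ)
    (z : (Fin n → ℝ) × (Fin n → ℝ)) : ℂ :=
  ((((2 * Real.pi) ^ n)⁻¹ : ℝ) : ℂ) *
    ∫ y : Fin n → ℝ,
      u (z.1 + (2⁻¹ : ℝ) • y) * (starRingEnd ℂ) (v (z.1 - (2⁻¹ : ℝ) • y)) *
        Complex.exp (-Complex.I * ((dotn y z.2 : ℝ) : ℂ))

open scoped ContDiff in
theorem contDiff_pDeriv {n : ℕ} (i : Fin n ⊕ Fin n) {f : (Fin n → ℝ) × (Fin n → ℝ) → ℂ}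
    (hf : ContDiff ℝ ∞ f) : ContDiff ℝ ∞ (pDeriv i f) :=
  (hf.fderiv_right (m := ∞) (by simp)).clm_apply contDiff_const

theorem pDerivList_append_singleton {n : ℕ} (L : List (Fin n ⊕ Fin n)) (i : Fin n ⊕ Fin n)
    (f : (Fin n → ℝ) × (Fin n → ℝ) → ℂ) :
    pDerivList (L ++ [i]) f = pDerivList L (pDeriv i f) := by
  simp [pDerivList, List.foldr_append]

/-- The coordinate functional on `ℝ^{2n}` dual to `stdVec`. -/
def coordCLM {n : ℕ} (i : Fin n ⊕ Fin n) : ((Fin n → ℝ) × (Fin n → ℝ)) →L[ℝ] ℝ :=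
  Sum.elim
    (fun j => (ContinuousLinearMap.proj j).comp (ContinuousLinearMap.fst ℝ _ _))
    (fun j => (ContinuousLinearMap.proj j).comp (ContinuousLinearMap.snd ℝ _ _)) i

theorem sum_coordCLM_smul_stdVec {n : ℕ} (z : (Fin n → ℝ) × (Fin n → ℝ)) :
    ∑ i, coordCLM i z • stdVec i = z := by
  simp only [Fintype.sum_sum_type, coordCLM, stdVec, Sum.elim_inl, Sum.elim_inr]
  ext j
  · simp [Prod.fst_sum, Finset.sum_apply, Pi.single_apply]
  · simp [Prod.snd_sum, Finset.sum_apply, Pi.single_apply]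

theorem fderiv_eq_sum_pDeriv {n : ℕ} (f : (Fin n → ℝ) × (Fin n → ℝ) → ℂ) :
    fderiv ℝ f = fun z => ∑ i, ContinuousLinearMap.smulRightL ℝ _ ℂ (coordCLM i) (pDeriv i f z) := by
  funext z
  refine ContinuousLinearMap.ext fun w => ?_
  conv_lhs => rw [← sum_coordCLM_smul_stdVec w, map_sum]
  simp [pDeriv]

open scoped ContDiff in
/-- Bounds on all partial derivatives give bounds on all Fréchet derivatives. -/
theorem exists_iteratedFDeriv_bound {n : ℕ} (k : ℕ) :
    ∀ (f : (Fin n → ℝ) × (Fin n → ℝ) → ℂ), ContDiff ℝ ∞ f →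
      (∀ L : List (Fin n ⊕ Fin n), ∃ M : ℝ, ∀ z, ‖pDerivList L f z‖ ≤ M) →
      ∃ M : ℝ, ∀ z, ‖iteratedFDeriv ℝ k f z‖ ≤ M := by
  induction k with
  | zero =>
    intro f _ h
    simpa [pDerivList] using h []
  | succ k ih =>
    intro f hf h
    have hi : ∀ i, ∃ M : ℝ, ∀ z, ‖iteratedFDeriv ℝ k (pDeriv i f) z‖ ≤ M := fun i =>
      ih _ (contDiff_pDeriv i hf) fun L => by
        simpa [pDerivList_append_singleton] using h (L ++ [i])
    choose M hM using hi
    refine ⟨∑ i, ‖ContinuousLinearMap.smulRightL ℝ _ ℂ (coordCLM (n := n) i)‖ * M i, fun z => ?_⟩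
    have hs : ∀ i, ContDiff ℝ ∞ (fun z =>
        ContinuousLinearMap.smulRightL ℝ _ ℂ (coordCLM i) (pDeriv i f z)) := fun i =>
      (ContinuousLinearMap.contDiff _).comp (contDiff_pDeriv i hf)
    rw [← norm_iteratedFDeriv_fderiv, fderiv_eq_sum_pDeriv,
      iteratedFDeriv_fun_sum_apply fun i _ => ((hs i).of_le (by exact_mod_cast le_top)).contDiffAt]
    refine (norm_sum_le _ _).trans (Finset.sum_le_sum fun i _ => ?_)
    refine (ContinuousLinearMap.norm_iteratedFDeriv_comp_left _
      (contDiff_pDeriv i hf).contDiffAt (by exact_mod_cast le_top)).trans ?_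
    exact mul_le_mul_of_nonneg_left (hM i z) (norm_nonneg _)

open scoped ContDiff in
theorem exists_iteratedFDeriv_window_bound {V E : Type*} [NormedAddCommGroup V]
    [InnerProductSpace ℝ V] [NormedAddCommGroup E] [NormedSpace ℝ E]
    (e : V →L[ℝ] E) {a : E → ℂ} (ha : ContDiff ℝ ∞ a)
    (hbd : ∀ k, ∃ M : ℝ, ∀ z, ‖iteratedFDeriv ℝ k a z‖ ≤ M)
    {χ : V → ℂ} (hχ : ContDiff ℝ ∞ χ) (k : ℕ) :
    ∃ M : ℕ → ℝ, ∀ z w, ‖iteratedFDeriv ℝ k (fun w => a (e w + z) * χ w) w‖ ≤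
      ∑ i ∈ Finset.range (k + 1), M i * ‖iteratedFDeriv ℝ (k - i) χ w‖ := by
  choose M hM using hbd
  refine ⟨fun i => (k.choose i : ℝ) * (M i * ‖e‖ ^ i), fun z w => ?_⟩
  have hz : ContDiff ℝ ∞ (fun x => a (x + z)) := ha.comp (contDiff_id.add contDiff_const)
  have h1 : ContDiff ℝ ∞ (fun w => a (e w + z)) := hz.comp e.contDiff
  refine (norm_iteratedFDeriv_mul_le h1 hχ w (by exact_mod_cast le_top)).trans ?_
  refine Finset.sum_le_sum fun i _ => ?_
  gcongr
  have h2 := e.iteratedFDeriv_comp_right (f := fun x => a (x + z)) hz w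
    (i := i) (by exact_mod_cast le_top)
  rw [show (fun w => a (e w + z)) = (fun x => a (x + z)) ∘ e from rfl, h2,
    iteratedFDeriv_comp_add_right]
  have h3 := ContinuousMultilinearMap.norm_compContinuousLinearMap_le
    (iteratedFDeriv ℝ i a (e w + z)) (fun _ : Fin i => e)
  rw [Finset.prod_const, Finset.card_univ, Fintype.card_fin] at h3
  refine mul_le_mul_of_nonneg_left (h3.trans ?_) (Nat.cast_nonneg _)
  gcongr
  exact hM _ _

open scoped ContDiff FourierTransform in
theorem exists_fourier_window_bound {V E : Type*} [NormedAddCommGroup V]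
    [InnerProductSpace ℝ V] [FiniteDimensional ℝ V] [MeasurableSpace V] [BorelSpace V]
    [NormedAddCommGroup E] [NormedSpace ℝ E]
    (e : V →L[ℝ] E) {a : E → ℂ} (ha : ContDiff ℝ ∞ a)
    (hbd : ∀ k, ∃ M : ℝ, ∀ z, ‖iteratedFDeriv ℝ k a z‖ ≤ M)
    {χ : V → ℂ} (hχ : ContDiff ℝ ∞ χ) (hχc : HasCompactSupport χ) (N : ℕ) :
    ∃ C : ℝ, ∀ z ζ, ‖ζ‖ ^ N * ‖𝓕 (fun w => a (e w + z) * χ w) ζ‖ ≤ C := by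
  choose M hM using exists_iteratedFDeriv_window_bound e ha hbd hχ
  have hint : ∀ j, Integrable (fun w => ‖iteratedFDeriv ℝ j χ w‖) := fun j =>
    ((hχ.continuous_iteratedFDeriv (by exact_mod_cast le_top)).integrable_of_hasCompactSupport
      (hχc.iteratedFDeriv j)).norm
  have hsm : ∀ z, ContDiff ℝ ∞ (fun w => a (e w + z) * χ w) := fun z =>
    (ha.comp (e.contDiff.add contDiff_const)).mul hχ
  have hcs : ∀ z, HasCompactSupport (fun w => a (e w + z) * χ w) := fun z => hχc.mul_left
  refine ⟨2 ^ N * ∑ p ∈ Finset.range 1 ×ˢ Finset.range (N + 1),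
    ∫ w, ∑ i ∈ Finset.range (p.2 + 1), M p.2 i * ‖iteratedFDeriv ℝ (p.2 - i) χ w‖,
    fun z ζ => ?_⟩
  have hd : ∀ k n : ℕ,
      Integrable (fun v => ‖v‖ ^ k * ‖iteratedFDeriv ℝ n (fun w => a (e w + z) * χ w) v‖) :=
    fun k n => ((continuous_norm.pow k).mul ((hsm z).continuous_iteratedFDeriv
      (by exact_mod_cast le_top)).norm).integrable_of_hasCompactSupport
      ((hcs z).iteratedFDeriv n).norm.mul_left
  have key := Real.pow_mul_norm_iteratedFDeriv_fourier_le (K := ⊤) (N := ⊤) (k := 0) (n := N)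
    (hsm z) (fun k n _ _ => hd k n) le_top le_top ζ
  simp only [norm_iteratedFDeriv_zero] at key
  refine key.trans ?_
  simp only [pow_zero, one_mul, Nat.cast_zero, mul_zero, zero_add]
  refine mul_le_mul_of_nonneg_left (Finset.sum_le_sum fun p hp => ?_) (by positivity)
  refine integral_mono (hd _ _) (integrable_finsetSum _ fun i _ => (hint _).const_mul _)
    fun w => ?_
  obtain ⟨h0, -⟩ := Finset.mem_product.1 hp
  simp only [Finset.range_one, Finset.mem_singleton] at h0
  simpa [h0] using hM p.2 z w

open scoped ContDiff FourierTransform in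
/-- Uniform Fourier representation of the localizations of a symbol. -/
theorem exists_fourier_window_representation {V E : Type*} [NormedAddCommGroup V]
    [InnerProductSpace ℝ V] [FiniteDimensional ℝ V] [MeasurableSpace V] [BorelSpace V]
    [NormedAddCommGroup E] [NormedSpace ℝ E] [MeasurableSpace E] [BorelSpace E]
    [SecondCountableTopology E]
    (e : V →L[ℝ] E) {a : E → ℂ} (ha : ContDiff ℝ ∞ a)
    (hbd : ∀ k, ∃ M : ℝ, ∀ z, ‖iteratedFDeriv ℝ k a z‖ ≤ M)
    {χ : V → ℂ} (hχ : ContDiff ℝ ∞ χ) (hχc : HasCompactSupport χ) :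
    ∃ (c : E → V → ℂ) (B : V → ℝ), StronglyMeasurable (Function.uncurry c) ∧ Integrable B ∧
      (∀ z ζ, ‖c z ζ‖ ≤ B ζ) ∧
      ∀ z w, a (e w + z) * χ w =
        ∫ ζ, Complex.exp (2 * Real.pi * Complex.I * (inner ℝ ζ w : ℝ)) * c z ζ := by
  obtain ⟨C₁, h₁⟩ := exists_fourier_window_bound e ha hbd hχ hχc 0
  obtain ⟨C₂, h₂⟩ := exists_fourier_window_bound e ha hbd hχ hχc
    (0 + (volume : Measure V).integrablePower)
  have hBi := (Measure.integrable_pow_neg_integrablePower (volume : Measure V)).const_mul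
    (2 ^ (volume : Measure V).integrablePower * (C₁ + C₂))
  have hB : ∀ z ζ, ‖𝓕 (fun w => a (e w + z) * χ w) ζ‖ ≤
      2 ^ (volume : Measure V).integrablePower * (C₁ + C₂) *
        (1 + ‖ζ‖) ^ (-((volume : Measure V).integrablePower : ℝ)) := fun z ζ => by
    simpa using pow_mul_le_of_le_of_pow_mul_le (k := 0) (norm_nonneg ζ) (norm_nonneg _)
      (by simpa using h₁ z ζ) (h₂ z ζ)
  have hcont : Continuous fun p : (E × V) × V => a (e p.2 + p.1.1) * χ p.2 :=
    (ha.continuous.comp (by fun_prop)).mul (hχ.continuous.comp continuous_snd)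
  have hmeas : StronglyMeasurable
      (Function.uncurry fun (z : E) (ζ : V) => 𝓕 (fun w => a (e w + z) * χ w) ζ) := by
    have h4 : Continuous fun p : (E × V) × V =>
        Complex.exp (↑(-2 * Real.pi * inner ℝ p.2 p.1.2) * Complex.I) := by
      fun_prop
    have h5 := h4.smul hcont
    simpa only [Real.fourier_eq', Function.uncurry_def] using
      h5.stronglyMeasurable.integral_prod_right (ν := (volume : Measure V))
  refine ⟨_, _, hmeas, hBi, hB, fun z w => ?_⟩
  have hf : Continuous fun w => a (e w + z) * χ w :=
    (ha.continuous.comp (by fun_prop)).mul hχ.continuous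
  have hF : Integrable (𝓕 fun w => a (e w + z) * χ w) :=
    hBi.mono' (hmeas.comp_measurable measurable_prodMk_left).aestronglyMeasurable
      (.of_forall (hB z))
  have := congrFun (hf.fourierInv_fourier_eq
    (hf.integrable_of_hasCompactSupport hχc.mul_left) hF) w
  rw [← this, Real.fourierInv_eq']
  refine integral_congr_ae (.of_forall fun ζ => ?_)
  simp only [smul_eq_mul]
  congr 2
  push_cast
  ring

/-- The Gabor transform of `u` with a Gaussian window. -/
def gabor {n : ℕ} (u : SchwartzMap (Fin n → ℝ) ℂ) (p : (Fin n → ℝ) × (Fin n → ℝ)) : ℂ :=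
  ∫ s : Fin n → ℝ, u s * (Real.exp (-2⁻¹ * dotn (s - p.1) (s - p.1)) : ℂ) *
    Complex.exp (-Complex.I * (dotn s p.2 : ℝ))

@[fun_prop]
theorem continuous_dotn {n : ℕ} {T : Type*} [TopologicalSpace T] {f g : T → Fin n → ℝ}
    (hf : Continuous f) (hg : Continuous g) : Continuous fun t => dotn (f t) (g t) := by
  unfold dotn
  fun_prop

theorem dotn_self_nonneg {n : ℕ} (x : Fin n → ℝ) : 0 ≤ dotn x x :=
  Finset.sum_nonneg fun i _ => mul_self_nonneg (x i)

theorem integrable_exp_neg_dotn {n : ℕ} :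
    Integrable fun x : Fin n → ℝ => Real.exp (-dotn x x) := by
  have h := GaussianFourier.integrable_cexp_neg_mul_sum_add (ι := Fin n) (b := 1) (by simp) 0
  refine h.norm.congr (.of_forall fun x => ?_)
  simp only [Complex.norm_exp, dotn]
  congr 1
  simp [pow_two]

theorem stronglyMeasurable_gabor {n : ℕ} (u : SchwartzMap (Fin n → ℝ) ℂ) :
    StronglyMeasurable (gabor u) := by
  have h : Continuous fun q : ((Fin n → ℝ) × (Fin n → ℝ)) × (Fin n → ℝ) =>
      u q.2 * (Real.exp (-2⁻¹ * dotn (q.2 - q.1.1) (q.2 - q.1.1)) : ℂ) *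
        Complex.exp (-Complex.I * (dotn q.2 q.1.2 : ℝ)) := by
    have := u.continuous
    fun_prop
  exact h.stronglyMeasurable.integral_prod_right (ν := (volume : Measure (Fin n → ℝ)))

theorem hasTemperateGrowth_exp_neg_norm_sq {H : Type*} [NormedAddCommGroup H]
    [InnerProductSpace ℝ H] :
    (fun x : H => Real.exp (-2⁻¹ * ‖x‖ ^ 2)).HasTemperateGrowth := by
  have hunique : UniqueDiffOn ℝ (Set.Ioi (-1 : ℝ)) := isOpen_Ioi.uniqueDiffOn
  have hg : ContDiff ℝ (⊤ : ℕ∞) fun r : ℝ => Real.exp (-2⁻¹ * r) := by fun_prop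
  refine Function.HasTemperateGrowth.comp' (g := fun r : ℝ => Real.exp (-2⁻¹ * r))
    (f := fun x : H => ‖x‖ ^ 2) (t := Set.Ioi (-1)) ?_ hunique hg.contDiffOn ?_
    (by fun_prop)
  · rintro - ⟨x, rfl⟩
    exact lt_of_lt_of_le (by norm_num : (-1 : ℝ) < 0) (by positivity)
  · refine fun N => ⟨0, Real.exp 1, by positivity, fun k _ x hx => ?_⟩
    rw [norm_iteratedFDerivWithin_eq_norm_iteratedDerivWithin,
      iteratedDerivWithin_eq_iteratedDeriv hunique
        (hg.of_le (by exact_mod_cast le_top)).contDiffAt hx, iteratedDeriv_exp_const_mul]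
    simp only [norm_mul, norm_pow, norm_neg, norm_inv, pow_zero, mul_one, Real.norm_eq_abs,
      Real.abs_exp, Nat.abs_ofNat]
    have h1 : (2⁻¹ : ℝ) ^ k ≤ 1 := pow_le_one₀ (by norm_num) (by norm_num)
    have h2 : Real.exp (-2⁻¹ * x) ≤ Real.exp 1 := Real.exp_le_exp.2 (by
      have : -1 < x := hx
      linarith)
    calc _ ≤ 1 * Real.exp 1 := mul_le_mul h1 h2 (Real.exp_nonneg _) zero_le_one
      _ = _ := one_mul _

open scoped FourierTransform in
theorem exists_gabor_eq_fourier {n : ℕ} (u : SchwartzMap (Fin n → ℝ) ℂ) (x₀ : Fin n → ℝ) :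
    ∃ f : SchwartzMap (EuclideanSpace ℝ (Fin n)) ℂ,
      (∀ s, f (WithLp.toLp 2 s) = u s * (Real.exp (-2⁻¹ * dotn (s - x₀) (s - x₀)) : ℂ)) ∧
      ∀ ξ₀, gabor u (x₀, ξ₀) = 𝓕 f (WithLp.toLp 2 ((2 * Real.pi)⁻¹ • ξ₀)) := by
  have hw : (fun x : EuclideanSpace ℝ (Fin n) =>
      Real.exp (-2⁻¹ * ‖x - WithLp.toLp 2 x₀‖ ^ 2)).HasTemperateGrowth :=
    hasTemperateGrowth_exp_neg_norm_sq.comp (by fun_prop)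
  let f₀ := SchwartzMap.compCLMOfContinuousLinearEquiv ℂ
    (EuclideanSpace.equiv (Fin n) ℝ) u
  let f := SchwartzMap.smulLeftCLM ℂ
    (fun x : EuclideanSpace ℝ (Fin n) => Real.exp (-2⁻¹ * ‖x - WithLp.toLp 2 x₀‖ ^ 2)) f₀
  have hf : ∀ s, f (WithLp.toLp 2 s) =
      u s * (Real.exp (-2⁻¹ * dotn (s - x₀) (s - x₀)) : ℂ) := fun s => by
    rw [SchwartzMap.smulLeftCLM_apply_apply hw]
    have h1 : f₀ (WithLp.toLp 2 s) = u s := rfl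
    have h2 : ‖WithLp.toLp 2 s - WithLp.toLp 2 x₀‖ ^ 2 = dotn (s - x₀) (s - x₀) := by
      rw [EuclideanSpace.norm_sq_eq]
      simp [dotn, pow_two]
    rw [h1, h2, Complex.real_smul, mul_comm]
  refine ⟨f, hf, fun ξ₀ => ?_⟩
  rw [SchwartzMap.fourier_coe, Real.fourier_eq',
    ← (PiLp.volume_preserving_toLp (Fin n)).integral_comp
      (MeasurableEquiv.toLp 2 _).measurableEmbedding]
  refine integral_congr_ae (.of_forall fun s => ?_)
  simp only [hf, smul_eq_mul]
  rw [mul_comm]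
  congr 2
  have : (-2 * Real.pi * inner ℝ (WithLp.toLp 2 s) (WithLp.toLp 2 ((2 * Real.pi)⁻¹ • ξ₀))) =
      -dotn s ξ₀ := by
    simp only [PiLp.inner_apply, dotn, Finset.mul_sum, ← Finset.sum_neg_distrib]
    refine Finset.sum_congr rfl fun i _ => ?_
    simp
    field_simp
  rw [this]
  push_cast
  ring

theorem gabor_plancherel_slice {n : ℕ} (u : SchwartzMap (Fin n → ℝ) ℂ) (x₀ : Fin n → ℝ) :
    Integrable (fun ξ => ‖gabor u (x₀, ξ)‖ ^ 2) ∧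
    ∫ ξ, ‖gabor u (x₀, ξ)‖ ^ 2 =
      (2 * Real.pi) ^ n * ∫ s, ‖u s‖ ^ 2 * Real.exp (-dotn (s - x₀) (s - x₀)) := by
  obtain ⟨f, hf, hg⟩ := exists_gabor_eq_fourier u x₀
  have hmp := PiLp.volume_preserving_toLp (Fin n)
  have hme := (MeasurableEquiv.toLp 2 (Fin n → ℝ)).measurableEmbedding
  simp only [hg]
  have hi : Integrable fun ζ => ‖FourierTransform.fourier f ζ‖ ^ 2 :=
    ((FourierTransform.fourier f).memLp 2).integrable_norm_pow (by norm_num)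
  have hi' : Integrable fun η : Fin n → ℝ =>
      ‖FourierTransform.fourier f (WithLp.toLp 2 η)‖ ^ 2 := (hmp.integrable_comp_emb hme).2 hi
  refine ⟨hi'.comp_smul (by positivity), ?_⟩
  rw [Measure.integral_comp_smul volume (fun η : Fin n → ℝ =>
    ‖FourierTransform.fourier f (WithLp.toLp 2 η)‖ ^ 2)]
  have h1 := hmp.integral_comp hme fun ζ => ‖FourierTransform.fourier f ζ‖ ^ 2
  have h2 := hmp.integral_comp hme fun ζ => ‖f ζ‖ ^ 2
  rw [h1, SchwartzMap.integral_norm_sq_fourier, ← h2]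
  simp only [hf, Module.finrank_fin_fun, smul_eq_mul, inv_pow, inv_inv]
  rw [abs_of_nonneg (by positivity)]
  congr 1
  refine integral_congr_ae (.of_forall fun s => ?_)
  simp only [norm_mul, mul_pow, Complex.norm_real, Real.norm_eq_abs, Real.abs_exp]
  rw [← Real.exp_nat_mul]
  congr 2
  push_cast
  ring

theorem gabor_plancherel {n : ℕ} (u : SchwartzMap (Fin n → ℝ) ℂ) :
    Integrable (fun p => ‖gabor u p‖ ^ 2) ∧
    ∫ p, ‖gabor u p‖ ^ 2 = (2 * Real.pi) ^ n *
      (∫ x : Fin n → ℝ, Real.exp (-dotn x x)) * ∫ s, ‖u s‖ ^ 2 := by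
  have hu : Integrable fun s => ‖u s‖ ^ 2 := (u.memLp 2).integrable_norm_pow (by norm_num)
  have heven : ∀ s x : Fin n → ℝ, dotn (s - x) (s - x) = dotn (x - s) (x - s) := fun s x =>
    Finset.sum_congr rfl fun i _ => by simp; ring
  have hconv : (fun x₀ => ∫ s, ‖u s‖ ^ 2 * Real.exp (-dotn (s - x₀) (s - x₀))) =
      convolution (fun s => ‖u s‖ ^ 2) (fun x => Real.exp (-dotn x x))
        (ContinuousLinearMap.mul ℝ ℝ) volume := by
    ext x₀
    simp only [convolution, ContinuousLinearMap.mul_apply', heven]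
  have hci := hu.integrable_convolution (ContinuousLinearMap.mul ℝ ℝ)
    (integrable_exp_neg_dotn (n := n))
  have hint : Integrable (fun p => ‖gabor u p‖ ^ 2)
      ((volume : Measure (Fin n → ℝ)).prod volume) := by
    refine (integrable_prod_iff
      ((stronglyMeasurable_gabor u).norm.pow 2).aestronglyMeasurable).2
      ⟨.of_forall fun x₀ => (gabor_plancherel_slice u x₀).1, ?_⟩
    rw [← hconv] at hci
    refine (hci.const_mul ((2 * Real.pi) ^ n)).congr (.of_forall fun x₀ => ?_)
    refine (gabor_plancherel_slice u x₀).2.symm.trans ?_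
    exact integral_congr_ae (.of_forall fun ξ => (Real.norm_of_nonneg (sq_nonneg _)).symm)
  refine ⟨hint, ?_⟩
  rw [Measure.volume_eq_prod, integral_prod _ hint]
  simp only [(gabor_plancherel_slice u _).2]
  rw [integral_const_mul, hconv, integral_convolution _ hu integrable_exp_neg_dotn]
  simp only [ContinuousLinearMap.mul_apply']
  ring

theorem integrable_midpoint_slice {n : ℕ} (u v : SchwartzMap (Fin n → ℝ) ℂ) (x : Fin n → ℝ) :
    Integrable fun y : Fin n → ℝ =>
      u (x + (2⁻¹ : ℝ) • y) * (starRingEnd ℂ) (v (x - (2⁻¹ : ℝ) • y)) := by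
  have h1 : Integrable fun y : Fin n → ℝ => u (x + (2⁻¹ : ℝ) • y) :=
    (u.integrable.comp_add_left x).comp_smul (by norm_num)
  have hv := v.continuous
  refine h1.mul_bdd (c := SchwartzMap.seminorm ℝ 0 0 v) ?_ (.of_forall fun y => ?_)
  · exact (Complex.continuous_conj.comp (by fun_prop)).aestronglyMeasurable
  · simpa using v.norm_le_seminorm ℝ (x - (2⁻¹ : ℝ) • y)

theorem exists_wigner_bound {n : ℕ} (u v : SchwartzMap (Fin n → ℝ) ℂ) :
    ∃ M : ℝ, ∀ z, ‖wigner u v z‖ ≤ M := by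
  refine ⟨‖((((2 * Real.pi) ^ n)⁻¹ : ℝ) : ℂ)‖ *
    ∫ y : Fin n → ℝ, ‖u ((2⁻¹ : ℝ) • y)‖ * SchwartzMap.seminorm ℝ 0 0 v, fun z => ?_⟩
  rw [wigner, norm_mul]
  refine mul_le_mul_of_nonneg_left ?_ (norm_nonneg _)
  have hi : Integrable fun y : Fin n → ℝ => ‖u ((2⁻¹ : ℝ) • y)‖ :=
    (u.integrable.comp_smul (by norm_num)).norm
  have hshift : ∫ y : Fin n → ℝ, ‖u ((2⁻¹ : ℝ) • y)‖ * SchwartzMap.seminorm ℝ 0 0 v =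
      ∫ y : Fin n → ℝ, ‖u (z.1 + (2⁻¹ : ℝ) • y)‖ * SchwartzMap.seminorm ℝ 0 0 v := by
    rw [← integral_add_right_eq_self _ ((2 : ℝ) • z.1)]
    refine integral_congr_ae (.of_forall fun y => ?_)
    simp only [smul_add, smul_smul]
    norm_num [add_comm]
  rw [hshift]
  have hi' : Integrable fun y : Fin n → ℝ => u (z.1 + (2⁻¹ : ℝ) • y) :=
    (u.integrable.comp_add_left z.1).comp_smul (by norm_num)
  refine norm_integral_le_of_norm_le (hi'.norm.mul_const _) (.of_forall fun y => ?_)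
  rw [norm_mul, norm_mul, Complex.norm_exp]
  simp only [Complex.neg_re, neg_mul, Complex.mul_re, Complex.I_re,
    Complex.ofReal_im, RCLike.norm_conj]
  simp only [zero_mul, mul_zero, sub_zero, neg_zero, Real.exp_zero, mul_one]
  exact mul_le_mul_of_nonneg_left (v.norm_le_seminorm ℝ _) (norm_nonneg _)

theorem stronglyMeasurable_wigner {n : ℕ} (u v : SchwartzMap (Fin n → ℝ) ℂ) :
    StronglyMeasurable (wigner u v) := by
  have h : Continuous fun q : ((Fin n → ℝ) × (Fin n → ℝ)) × (Fin n → ℝ) =>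
      u (q.1.1 + (2⁻¹ : ℝ) • q.2) * (starRingEnd ℂ) (v (q.1.1 - (2⁻¹ : ℝ) • q.2)) *
        Complex.exp (-Complex.I * ((dotn q.2 q.1.2 : ℝ) : ℂ)) := by
    have hu := u.continuous
    have hv := v.continuous
    exact ((hu.comp (by fun_prop)).mul (Complex.continuous_conj.comp (by fun_prop))).mul
      (by fun_prop)
  exact (h.stronglyMeasurable.integral_prod_right
    (ν := (volume : Measure (Fin n → ℝ)))).const_mul _

theorem integral_integral_midpoint {n : ℕ} {f g : (Fin n → ℝ) → ℂ} (hf : Integrable f)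
    (hg : Integrable g) :
    ∫ x : Fin n → ℝ, ∫ y : Fin n → ℝ, f (x + (2⁻¹ : ℝ) • y) * g (x - (2⁻¹ : ℝ) • y) =
      (∫ s, f s) * ∫ t, g t := by
  have h1 : ∀ x : Fin n → ℝ,
      ∫ y : Fin n → ℝ, f (x + (2⁻¹ : ℝ) • y) * g (x - (2⁻¹ : ℝ) • y) =
      (2 ^ n : ℝ) • convolution f g (ContinuousLinearMap.mul ℝ ℂ) volume ((2 : ℝ) • x) := by
    intro x
    rw [Measure.integral_comp_smul volume fun y : Fin n → ℝ => f (x + y) * g (x - y)]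
    simp only [convolution, ContinuousLinearMap.mul_apply', Module.finrank_fin_fun, inv_pow,
      inv_inv]
    rw [abs_of_nonneg (by positivity),
      ← integral_add_left_eq_self (fun s => f s * g ((2 : ℝ) • x - s)) x]
    congr 2
    ext y
    congr 2
    rw [two_smul]
    abel
  simp only [h1]
  rw [integral_smul, Measure.integral_comp_smul volume
    (convolution f g (ContinuousLinearMap.mul ℝ ℂ) volume),
    integral_convolution _ hf hg, smul_smul, Module.finrank_fin_fun,
    abs_of_nonneg (by positivity), mul_inv_cancel₀ (by positivity), one_smul,
    ContinuousLinearMap.mul_apply']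

theorem integral_gaussian_mul_character {n : ℕ} (y ξ₀ β : Fin n → ℝ) :
    ∫ ξ : Fin n → ℝ, Complex.exp (-Complex.I * (dotn y ξ : ℝ)) *
      ((Real.exp (-dotn (ξ - ξ₀) (ξ - ξ₀)) : ℂ) *
        Complex.exp (2 * Real.pi * Complex.I * (dotn β (ξ - ξ₀) : ℝ))) =
    (Real.pi : ℂ) ^ (n / 2 : ℂ) * (Complex.exp (-Complex.I * (dotn y ξ₀ : ℝ)) *
      (Real.exp (-4⁻¹ * dotn (y - (2 * Real.pi) • β) (y - (2 * Real.pi) • β)) : ℂ)) := by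
  have h := GaussianFourier.integral_cexp_neg_mul_sum_add (ι := Fin n) (b := 1) (by simp)
    (fun i => Complex.I * (2 * Real.pi * β i - y i : ℝ))
  rw [← integral_add_right_eq_self _ ξ₀]
  calc _ = ∫ η : Fin n → ℝ, Complex.exp (-Complex.I * (dotn y ξ₀ : ℝ)) *
        Complex.exp (-1 * ∑ i, (η i : ℂ) ^ 2 +
          ∑ i, Complex.I * (2 * Real.pi * β i - y i : ℝ) * η i) := by
        refine integral_congr_ae (.of_forall fun η => ?_)
        simp only [add_sub_cancel_right, Complex.ofReal_exp, ← Complex.exp_add, dotn]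
        congr 1
        push_cast
        simp only [Finset.mul_sum, ← Finset.sum_neg_distrib, ← Finset.sum_add_distrib]
        refine Finset.sum_congr rfl fun i _ => ?_
        simp only [Pi.add_apply]
        push_cast
        ring
    _ = _ := by
        rw [integral_const_mul, h, Fintype.card_fin, div_one, mul_left_comm]
        congr 2
        rw [Complex.ofReal_exp]
        congr 1
        simp only [dotn]
        push_cast
        simp only [Finset.mul_sum, Finset.sum_div]
        refine Finset.sum_congr rfl fun i _ => ?_
        rw [mul_pow, Complex.I_sq]
        simp only [Pi.sub_apply, Pi.smul_apply, smul_eq_mul]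
        push_cast
        ring

theorem gaussian_midpoint_identity {n : ℕ} (x y x₀ ξ₀ α β : Fin n → ℝ) :
    (Real.exp (-dotn (x - x₀) (x - x₀)) : ℂ) *
        Complex.exp (2 * Real.pi * Complex.I * (dotn α (x - x₀) : ℝ)) *
      (Complex.exp (-Complex.I * (dotn y ξ₀ : ℝ)) *
      (Real.exp (-4⁻¹ * dotn (y - (2 * Real.pi) • β) (y - (2 * Real.pi) • β)) : ℂ)) =
    Complex.exp (-(2 * Real.pi * (dotn α x₀ : ℝ) * Complex.I)) *
      ((Real.exp (-2⁻¹ * dotn (x + (2⁻¹ : ℝ) • y - (x₀ + Real.pi • β))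
          (x + (2⁻¹ : ℝ) • y - (x₀ + Real.pi • β))) : ℂ) *
        Complex.exp (-Complex.I * (dotn (x + (2⁻¹ : ℝ) • y) (ξ₀ - Real.pi • α) : ℝ))) *
      (starRingEnd ℂ) ((Real.exp (-2⁻¹ * dotn (x - (2⁻¹ : ℝ) • y - (x₀ - Real.pi • β))
          (x - (2⁻¹ : ℝ) • y - (x₀ - Real.pi • β))) : ℂ) *
        Complex.exp (-Complex.I * (dotn (x - (2⁻¹ : ℝ) • y) (ξ₀ + Real.pi • α) : ℝ))) := by
  rw [map_mul, Complex.conj_ofReal, ← Complex.exp_conj]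
  simp only [Complex.ofReal_exp, map_mul, map_neg, Complex.conj_I, Complex.conj_ofReal,
    ← Complex.exp_add]
  congr 1
  simp only [dotn]
  push_cast
  simp only [Finset.mul_sum, Finset.sum_mul, ← Finset.sum_neg_distrib, ← Finset.sum_add_distrib]
  refine Finset.sum_congr rfl fun i _ => ?_
  simp only [Pi.sub_apply, Pi.add_apply, Pi.smul_apply, smul_eq_mul]
  push_cast
  ring

instance isAddHaarMeasure_volume_phase {n : ℕ} :
    (volume : Measure ((Fin n → ℝ) × (Fin n → ℝ))).IsAddHaarMeasure :=
  Measure.prod.instIsAddHaarMeasure _ _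

instance isNegInvariant_volume_phase {n : ℕ} :
    (volume : Measure ((Fin n → ℝ) × (Fin n → ℝ))).IsNegInvariant :=
  ⟨by
    rw [Measure.volume_eq_prod]
    exact ((Measure.measurePreserving_neg (volume : Measure (Fin n → ℝ))).prod
      (Measure.measurePreserving_neg (volume : Measure (Fin n → ℝ)))).map_eq⟩

/-- The phase-space Gaussian centred at the origin. -/
def phaseGauss {n : ℕ} (z : (Fin n → ℝ) × (Fin n → ℝ)) : ℝ :=
  Real.exp (-dotn z.1 z.1) * Real.exp (-dotn z.2 z.2)

theorem phaseGauss_pos {n : ℕ} (z : (Fin n → ℝ) × (Fin n → ℝ)) : 0 < phaseGauss z := by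
  unfold phaseGauss
  positivity

@[fun_prop]
theorem continuous_phaseGauss {n : ℕ} : Continuous (phaseGauss (n := n)) := by
  unfold phaseGauss
  fun_prop

theorem integrable_phaseGauss {n : ℕ} : Integrable (phaseGauss (n := n)) :=
  integrable_exp_neg_dotn.mul_prod integrable_exp_neg_dotn

theorem norm_exp_ofReal_mul_I' (r : ℝ) : ‖Complex.exp (-Complex.I * (r : ℂ))‖ = 1 := by
  rw [show -Complex.I * (r : ℂ) = ((-r : ℝ) : ℂ) * Complex.I by push_cast; ring]
  exact Complex.norm_exp_ofReal_mul_I _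

theorem norm_exp_two_pi_I_mul (r : ℝ) : ‖Complex.exp (2 * Real.pi * Complex.I * (r : ℂ))‖ = 1 := by
  rw [show 2 * Real.pi * Complex.I * (r : ℂ) = ((2 * Real.pi * r : ℝ) : ℂ) * Complex.I by
    push_cast; ring]
  exact Complex.norm_exp_ofReal_mul_I _

theorem integrable_gabor_integrand {n : ℕ} (u : SchwartzMap (Fin n → ℝ) ℂ)
    (x₀ ξ₀ : Fin n → ℝ) :
    Integrable fun s => u s * (Real.exp (-2⁻¹ * dotn (s - x₀) (s - x₀)) : ℂ) *
      Complex.exp (-Complex.I * (dotn s ξ₀ : ℝ)) := by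
  refine (u.integrable.mul_bdd (c := 1) ?_ (.of_forall fun s => ?_)).mul_bdd (c := 1) ?_
    (.of_forall fun s => (norm_exp_ofReal_mul_I' _).le)
  · exact (by fun_prop : Continuous _).aestronglyMeasurable
  · rw [Complex.norm_real, Real.norm_eq_abs, Real.abs_exp, Real.exp_le_one_iff]
    nlinarith [dotn_self_nonneg (s - x₀)]
  · exact (by fun_prop : Continuous _).aestronglyMeasurable

/-- The local Fourier modes of the Wigner transform. -/
def wignerMode {n : ℕ} (u v : SchwartzMap (Fin n → ℝ) ℂ) (α β : Fin n → ℝ)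
    (z₀ : (Fin n → ℝ) × (Fin n → ℝ)) : ℂ :=
  ∫ z, wigner u v z * ((phaseGauss (z - z₀) : ℂ) *
    Complex.exp (2 * Real.pi * Complex.I * (dotn α (z - z₀).1 + dotn β (z - z₀).2 : ℝ)))

theorem integrable_wigner_mul_phaseGauss {n : ℕ} (u v : SchwartzMap (Fin n → ℝ) ℂ)
    (z₀ : (Fin n → ℝ) × (Fin n → ℝ)) :
    Integrable fun z => wigner u v z * (phaseGauss (z - z₀) : ℂ) := by
  obtain ⟨M, hM⟩ := exists_wigner_bound u v
  exact (integrable_phaseGauss.comp_sub_right z₀).ofReal.bdd_mul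
    (stronglyMeasurable_wigner u v).aestronglyMeasurable (.of_forall hM)

theorem wignerMode_eq {n : ℕ} (u v : SchwartzMap (Fin n → ℝ) ℂ) (α β x₀ ξ₀ : Fin n → ℝ) :
    wignerMode u v α β (x₀, ξ₀) =
      ((((2 * Real.pi) ^ n)⁻¹ : ℝ) : ℂ) * (Real.pi : ℂ) ^ (n / 2 : ℂ) *
      (Complex.exp (-(2 * Real.pi * (dotn α x₀ : ℝ) * Complex.I)) *
      (gabor u (x₀ + Real.pi • β, ξ₀ - Real.pi • α) *
        (starRingEnd ℂ) (gabor v (x₀ - Real.pi • β, ξ₀ + Real.pi • α)))) := by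
  have hint : Integrable (fun z => wigner u v z * ((phaseGauss (z - (x₀, ξ₀)) : ℂ) *
      Complex.exp (2 * Real.pi * Complex.I *
        (dotn α (z - (x₀, ξ₀)).1 + dotn β (z - (x₀, ξ₀)).2 : ℝ))))
      ((volume : Measure (Fin n → ℝ)).prod volume) := by
    simp only [← mul_assoc (wigner u v _)]
    exact (integrable_wigner_mul_phaseGauss u v (x₀, ξ₀)).mul_bdd (c := 1)
      (by fun_prop : Continuous _).aestronglyMeasurable
      (.of_forall fun z => (norm_exp_two_pi_I_mul _).le)
  have hslice : ∀ x : Fin n → ℝ, ∫ ξ, wigner u v (x, ξ) * ((phaseGauss ((x, ξ) - (x₀, ξ₀)) : ℂ) *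
      Complex.exp (2 * Real.pi * Complex.I *
        (dotn α ((x, ξ) - (x₀, ξ₀)).1 + dotn β ((x, ξ) - (x₀, ξ₀)).2 : ℝ))) =
      ((((2 * Real.pi) ^ n)⁻¹ : ℝ) : ℂ) * (Real.pi : ℂ) ^ (n / 2 : ℂ) *
      (Complex.exp (-(2 * Real.pi * (dotn α x₀ : ℝ) * Complex.I)) *
      ∫ y : Fin n → ℝ, (fun s => u s *
          (Real.exp (-2⁻¹ * dotn (s - (x₀ + Real.pi • β)) (s - (x₀ + Real.pi • β))) : ℂ) *
          Complex.exp (-Complex.I * (dotn s (ξ₀ - Real.pi • α) : ℝ))) (x + (2⁻¹ : ℝ) • y) *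
        (fun s => (starRingEnd ℂ) (v s *
          (Real.exp (-2⁻¹ * dotn (s - (x₀ - Real.pi • β)) (s - (x₀ - Real.pi • β))) : ℂ) *
          Complex.exp (-Complex.I * (dotn s (ξ₀ + Real.pi • α) : ℝ)))) (x - (2⁻¹ : ℝ) • y)) := by
    intro x
    have hF : Integrable (fun p : (Fin n → ℝ) × (Fin n → ℝ) =>
        ((u (x + (2⁻¹ : ℝ) • p.2) * (starRingEnd ℂ) (v (x - (2⁻¹ : ℝ) • p.2))) *
        Complex.exp (-Complex.I * (dotn p.2 p.1 : ℝ))) *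
        ((Real.exp (-dotn (p.1 - ξ₀) (p.1 - ξ₀)) : ℂ) *
          Complex.exp (2 * Real.pi * Complex.I * (dotn β (p.1 - ξ₀) : ℝ))))
        ((volume : Measure (Fin n → ℝ)).prod volume) := by
      have h1 : Integrable fun ξ : Fin n → ℝ => (Real.exp (-dotn (ξ - ξ₀) (ξ - ξ₀)) : ℂ) *
          Complex.exp (2 * Real.pi * Complex.I * (dotn β (ξ - ξ₀) : ℝ)) :=
        (integrable_exp_neg_dotn.comp_sub_right ξ₀).ofReal.mul_bdd (c := 1)
          (by fun_prop : Continuous _).aestronglyMeasurable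
          (.of_forall fun z => (norm_exp_two_pi_I_mul _).le)
      refine ((h1.mul_prod (integrable_midpoint_slice u v x)).mul_bdd (c := 1)
        (g := fun p : (Fin n → ℝ) × (Fin n → ℝ) =>
          Complex.exp (-Complex.I * (dotn p.2 p.1 : ℝ)))
        (by fun_prop : Continuous _).aestronglyMeasurable
        (.of_forall fun p => (norm_exp_ofReal_mul_I' _).le)).congr (.of_forall fun p => ?_)
      simp only
      ring
    calc _ = ∫ ξ, (((((2 * Real.pi) ^ n)⁻¹ : ℝ) : ℂ) *
          ((Real.exp (-dotn (x - x₀) (x - x₀)) : ℂ) *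
            Complex.exp (2 * Real.pi * Complex.I * (dotn α (x - x₀) : ℝ)))) *
          ∫ y : Fin n → ℝ, ((u (x + (2⁻¹ : ℝ) • y) * (starRingEnd ℂ) (v (x - (2⁻¹ : ℝ) • y))) *
            Complex.exp (-Complex.I * (dotn y ξ : ℝ))) *
            ((Real.exp (-dotn (ξ - ξ₀) (ξ - ξ₀)) : ℂ) *
              Complex.exp (2 * Real.pi * Complex.I * (dotn β (ξ - ξ₀) : ℝ))) := by
          refine integral_congr_ae (.of_forall fun ξ => ?_)
          simp only [integral_mul_const, wigner, phaseGauss, Prod.fst_sub, Prod.snd_sub]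
          rw [Complex.ofReal_add, mul_add, Complex.exp_add, Complex.ofReal_mul]
          ring
      _ = _ := by
          rw [integral_const_mul, integral_integral_swap hF]
          simp only [mul_assoc (u _ * _), integral_const_mul, integral_gaussian_mul_character]
          simp only [← integral_const_mul]
          refine integral_congr_ae (.of_forall fun y => ?_)
          have h := gaussian_midpoint_identity x y x₀ ξ₀ α β
          simp only [map_mul] at h ⊢
          linear_combination (((((2 * Real.pi) ^ n)⁻¹ : ℝ) : ℂ) * (Real.pi : ℂ) ^ (n / 2 : ℂ) *
            (u (x + (2⁻¹ : ℝ) • y) * (starRingEnd ℂ) (v (x - (2⁻¹ : ℝ) • y)))) * h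
  rw [wignerMode, Measure.volume_eq_prod, integral_prod _ hint]
  simp only [hslice]
  have hv : Integrable fun s => (starRingEnd ℂ) (v s *
      (Real.exp (-2⁻¹ * dotn (s - (x₀ - Real.pi • β)) (s - (x₀ - Real.pi • β))) : ℂ) *
      Complex.exp (-Complex.I * (dotn s (ξ₀ + Real.pi • α) : ℝ))) :=
    Complex.conjLIE.integrable_comp_iff.2 (integrable_gabor_integrand v _ _)
  rw [integral_const_mul, integral_const_mul,
    integral_integral_midpoint (integrable_gabor_integrand u _ _) hv, integral_conj]
  rfl

theorem integral_mul_le_sqrt_mul_sqrt {Ω : Type*} [MeasurableSpace Ω] {μ : Measure Ω}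
    {f g : Ω → ℝ} (hf₀ : ∀ x, 0 ≤ f x) (hg₀ : ∀ x, 0 ≤ g x) (hf : MemLp f 2 μ)
    (hg : MemLp g 2 μ) :
    ∫ x, f x * g x ∂μ ≤ √(∫ x, f x ^ 2 ∂μ) * √(∫ x, g x ^ 2 ∂μ) := by
  have h := integral_mul_le_Lp_mul_Lq_of_nonneg (p := 2) (q := 2) Real.HolderConjugate.two_two
    (μ := μ) (.of_forall hf₀) (.of_forall hg₀) (by simpa using hf) (by simpa using hg)
  simpa [Real.sqrt_eq_rpow] using h

theorem exists_wignerMode_integral_bound (n : ℕ) :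
    ∃ K : ℝ, 0 ≤ K ∧ ∀ (u v : SchwartzMap (Fin n → ℝ) ℂ) (α β : Fin n → ℝ),
      Integrable (fun z₀ => ‖wignerMode u v α β z₀‖) ∧
      ∫ z₀, ‖wignerMode u v α β z₀‖ ≤
        K * (√(∫ x : Fin n → ℝ, ‖u x‖ ^ 2) * √(∫ x : Fin n → ℝ, ‖v x‖ ^ 2)) := by
  set A : ℝ := ‖((((2 * Real.pi) ^ n)⁻¹ : ℝ) : ℂ) * (Real.pi : ℂ) ^ (n / 2 : ℂ)‖
  set D : ℝ := (2 * Real.pi) ^ n * ∫ x : Fin n → ℝ, Real.exp (-dotn x x)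
  have hD : 0 ≤ D := mul_nonneg (by positivity) (integral_nonneg fun _ => Real.exp_nonneg _)
  refine ⟨A * D, mul_nonneg (norm_nonneg _) hD, fun u v α β => ?_⟩
  have hmem : ∀ (w : SchwartzMap (Fin n → ℝ) ℂ) (b : (Fin n → ℝ) × (Fin n → ℝ)),
      MemLp (fun p => ‖gabor w (p + b)‖) 2 := fun w b => by
    have hm : AEStronglyMeasurable fun p => ‖gabor w (p + b)‖ :=
      ((stronglyMeasurable_gabor w).comp_measurable
        (measurable_id.add_const b)).norm.aestronglyMeasurable
    exact (memLp_two_iff_integrable_sq hm).2 ((gabor_plancherel w).1.comp_add_right b)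
  have hval : ∀ (w : SchwartzMap (Fin n → ℝ) ℂ) (b : (Fin n → ℝ) × (Fin n → ℝ)),
      √(∫ p, ‖gabor w (p + b)‖ ^ 2) = √D * √(∫ x : Fin n → ℝ, ‖w x‖ ^ 2) := fun w b => by
    rw [integral_add_right_eq_self (fun p => ‖gabor w p‖ ^ 2) b, (gabor_plancherel w).2,
      Real.sqrt_mul hD]
  have hnorm : ∀ z₀, ‖wignerMode u v α β z₀‖ =
      A * (‖gabor u (z₀ + (Real.pi • β, -(Real.pi • α)))‖ *
        ‖gabor v (z₀ + (-(Real.pi • β), Real.pi • α))‖) := fun z₀ => by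
    obtain ⟨x₀, ξ₀⟩ := z₀
    rw [wignerMode_eq, norm_mul, norm_mul (Complex.exp _), norm_mul (gabor _ _), RCLike.norm_conj,
      show -(2 * Real.pi * (dotn α x₀ : ℝ) * Complex.I) =
        ((-(2 * Real.pi * dotn α x₀) : ℝ) : ℂ) * Complex.I by push_cast; ring,
      Complex.norm_exp_ofReal_mul_I, one_mul]
    simp only [Prod.mk_add_mk, ← sub_eq_add_neg, A]
  simp only [hnorm]
  refine ⟨((hmem u _).integrable_mul (hmem v _)).const_mul A, ?_⟩
  rw [integral_const_mul, mul_assoc]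
  refine mul_le_mul_of_nonneg_left ?_ (norm_nonneg _)
  refine (integral_mul_le_sqrt_mul_sqrt (fun _ => norm_nonneg _) (fun _ => norm_nonneg _)
    (hmem u _) (hmem v _)).trans_eq ?_
  rw [hval, hval]
  nth_rewrite 3 [← Real.mul_self_sqrt hD]
  ring

/-- The coordinates of phase space. -/
def phaseEquiv (n : ℕ) :
    EuclideanSpace ℝ (Fin n ⊕ Fin n) ≃L[ℝ] (Fin n → ℝ) × (Fin n → ℝ) :=
  (EuclideanSpace.equiv (Fin n ⊕ Fin n) ℝ).trans
    (LinearEquiv.sumArrowLequivProdArrow (Fin n) (Fin n) ℝ ℝ).toContinuousLinearEquiv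

theorem inner_phaseEquiv_symm {n : ℕ} (ζ : EuclideanSpace ℝ (Fin n ⊕ Fin n))
    (z : (Fin n → ℝ) × (Fin n → ℝ)) :
    inner ℝ ζ ((phaseEquiv n).symm z) =
      dotn (phaseEquiv n ζ).1 z.1 + dotn (phaseEquiv n ζ).2 z.2 := by
  obtain ⟨w, rfl⟩ := (phaseEquiv n).surjective z
  rw [ContinuousLinearEquiv.symm_apply_apply]
  simp only [PiLp.inner_apply, Fintype.sum_sum_type, dotn]
  congr 1 <;> refine Finset.sum_congr rfl fun i _ => mul_comm _ _

open scoped ContDiff in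
theorem exists_phase_window (n : ℕ) :
    ∃ χ : EuclideanSpace ℝ (Fin n ⊕ Fin n) → ℂ, ContDiff ℝ ∞ χ ∧ HasCompactSupport χ ∧
      (∀ w, ‖χ w‖ ≤ 1) ∧
      0 < ‖∫ z, χ ((phaseEquiv n).symm z) * (phaseGauss z : ℂ)‖ := by
  let ρ : ContDiffBump (0 : EuclideanSpace ℝ (Fin n ⊕ Fin n)) := ⟨1, 2, one_pos, one_lt_two⟩
  refine ⟨fun w => (ρ w : ℂ), Complex.ofRealCLM.contDiff.comp ρ.contDiff,
    ρ.hasCompactSupport.comp_left Complex.ofReal_zero, fun w => ?_, ?_⟩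
  · rw [Complex.norm_real, Real.norm_of_nonneg ρ.nonneg]
    exact ρ.le_one
  · simp only [← Complex.ofReal_mul, integral_complex_ofReal, Complex.norm_real]
    refine norm_pos_iff.2 (ne_of_gt ?_)
    have hρ : Continuous ρ := ρ.continuous
    refine Continuous.integral_pos_of_hasCompactSupport_nonneg_nonzero (x := 0) (by fun_prop)
      ?_ (fun z => mul_nonneg ρ.nonneg (phaseGauss_pos z).le) ?_
    · exact (ρ.hasCompactSupport.comp_homeomorph (phaseEquiv n).symm.toHomeomorph).mul_right
    · refine mul_ne_zero ?_ (phaseGauss_pos _).ne'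
      rw [map_zero, ρ.one_of_mem_closedBall (Metric.mem_closedBall_self ρ.rIn_pos.le)]
      exact one_ne_zero

theorem norm_integral_localized_le {n : ℕ} {a : (Fin n → ℝ) × (Fin n → ℝ) → ℂ}
    {χ : EuclideanSpace ℝ (Fin n ⊕ Fin n) → ℂ}
    {c : (Fin n → ℝ) × (Fin n → ℝ) → EuclideanSpace ℝ (Fin n ⊕ Fin n) → ℂ}
    {B : EuclideanSpace ℝ (Fin n ⊕ Fin n) → ℝ}
    (hc : StronglyMeasurable (Function.uncurry c)) (hB : Integrable B)
    (hcB : ∀ z ζ, ‖c z ζ‖ ≤ B ζ)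
    (hrep : ∀ z w, a (phaseEquiv n w + z) * χ w =
        ∫ ζ, Complex.exp (2 * Real.pi * Complex.I * (inner ℝ ζ w : ℝ)) * c z ζ)
    {u v : SchwartzMap (Fin n → ℝ) ℂ} {Q : ℝ}
    (hQi : ∀ α β, Integrable (fun z₀ => ‖wignerMode u v α β z₀‖))
    (hQ : ∀ α β, ∫ z₀, ‖wignerMode u v α β z₀‖ ≤ Q)
    {S : Set ((Fin n → ℝ) × (Fin n → ℝ))} (hS : volume S < ⊤) :
    ‖∫ z, a z * wigner u v z *
      ∫ z₀ in S, χ ((phaseEquiv n).symm (z - z₀)) * (phaseGauss (z - z₀) : ℂ)‖ ≤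
      (∫ ζ, B ζ) * Q := by
  have hSf : IsFiniteMeasure (volume.restrict S) := ⟨by simpa using hS⟩
  have hB₀ : ∀ ζ, 0 ≤ B ζ := fun ζ => (norm_nonneg _).trans (hcB 0 ζ)
  obtain ⟨M, hM⟩ := exists_wigner_bound u v
  let ph : (Fin n → ℝ) × (Fin n → ℝ) → EuclideanSpace ℝ (Fin n ⊕ Fin n) → ℂ := fun z ζ =>
    Complex.exp (2 * Real.pi * Complex.I * (inner ℝ ζ ((phaseEquiv n).symm z) : ℝ))
  have hph : ∀ z ζ, ‖ph z ζ‖ = 1 := fun z ζ => norm_exp_two_pi_I_mul _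
  let H : (Fin n → ℝ) × (Fin n → ℝ) →
      EuclideanSpace ℝ (Fin n ⊕ Fin n) × ((Fin n → ℝ) × (Fin n → ℝ)) → ℂ := fun z p =>
    (wigner u v z * (phaseGauss (z - p.2) : ℂ)) * (ph (z - p.2) p.1 * c p.2 p.1)
  let ν : Measure (EuclideanSpace ℝ (Fin n ⊕ Fin n) × ((Fin n → ℝ) × (Fin n → ℝ))) :=
    volume.prod (volume.restrict S)
  have hHm : StronglyMeasurable (Function.uncurry H) := by
    have h1 : Continuous fun q : ((Fin n → ℝ) × (Fin n → ℝ)) ×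
        (EuclideanSpace ℝ (Fin n ⊕ Fin n) × ((Fin n → ℝ) × (Fin n → ℝ))) =>
        (phaseGauss (q.1 - q.2.2) : ℂ) := by fun_prop
    have h2 : Continuous fun q : ((Fin n → ℝ) × (Fin n → ℝ)) ×
        (EuclideanSpace ℝ (Fin n ⊕ Fin n) × ((Fin n → ℝ) × (Fin n → ℝ))) =>
        ph (q.1 - q.2.2) q.2.1 := by
      have := (phaseEquiv n).symm.continuous
      fun_prop
    exact (((stronglyMeasurable_wigner u v).comp_measurable measurable_fst).mul
      h1.stronglyMeasurable).mul (h2.stronglyMeasurable.mul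
      (hc.comp_measurable (measurable_snd.comp measurable_snd |>.prodMk
        (measurable_fst.comp measurable_snd))))
  have hHn : ∀ z p, ‖H z p‖ ≤ M * (phaseGauss (z - p.2) * B p.1) := fun z p => by
    simp only [H, norm_mul, hph, one_mul, Complex.norm_real, Real.norm_of_nonneg
      (phaseGauss_pos _).le, mul_assoc]
    exact mul_le_mul (hM z) (mul_le_mul_of_nonneg_left (hcB _ _) (phaseGauss_pos _).le)
      (mul_nonneg (phaseGauss_pos _).le (norm_nonneg _)) ((norm_nonneg _).trans (hM z))
  have hHi : Integrable (Function.uncurry H) (volume.prod ν) := by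
    refine (integrable_prod_iff' hHm.aestronglyMeasurable).2 ⟨.of_forall fun p => ?_, ?_⟩
    · refine (((integrable_phaseGauss.comp_sub_right p.2).mul_const (B p.1)).const_mul M).mono'
        (hHm.comp_measurable measurable_prodMk_right).aestronglyMeasurable
        (.of_forall fun z => hHn z p)
    · have hdom : Integrable (fun p : EuclideanSpace ℝ (Fin n ⊕ Fin n) ×
          ((Fin n → ℝ) × (Fin n → ℝ)) => B p.1 *
            (M * ∫ z : (Fin n → ℝ) × (Fin n → ℝ), phaseGauss z)) ν :=
        hB.mul_prod (integrable_const _)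
      refine hdom.mono' hHm.norm.integral_prod_left.aestronglyMeasurable (.of_forall fun p => ?_)
      rw [Real.norm_of_nonneg (integral_nonneg fun _ => norm_nonneg _)]
      calc ∫ z, ‖H z p‖ ≤ ∫ z, M * (phaseGauss (z - p.2) * B p.1) :=
            integral_mono_of_nonneg (.of_forall fun _ => norm_nonneg _)
              (((integrable_phaseGauss.comp_sub_right p.2).mul_const (B p.1)).const_mul M)
              (.of_forall fun z => hHn z p)
        _ = _ := by
            rw [integral_const_mul, integral_mul_const,
              integral_sub_right_eq_self (fun z => phaseGauss z) p.2]
            ring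
  have hgauss : ∀ z, Integrable (fun z₀ => phaseGauss (z - z₀)) (volume.restrict S) := fun z =>
    (integrable_phaseGauss.comp_sub_left z).restrict
  have hHz : ∀ z, Integrable (H z) ν := fun z => by
    have hdom : Integrable (fun p : EuclideanSpace ℝ (Fin n ⊕ Fin n) ×
        ((Fin n → ℝ) × (Fin n → ℝ)) => M * (B p.1 * phaseGauss (z - p.2))) ν :=
      (hB.mul_prod (hgauss z)).const_mul M
    refine hdom.mono' (hHm.comp_measurable measurable_prodMk_left).aestronglyMeasurable
      (.of_forall fun p => (hHn z p).trans_eq (by ring))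
  have hinner : ∀ z, a z * wigner u v z *
      ∫ z₀ in S, χ ((phaseEquiv n).symm (z - z₀)) * (phaseGauss (z - z₀) : ℂ) =
      ∫ p, H z p ∂ν := fun z => by
    rw [integral_prod_symm _ (hHz z), ← integral_const_mul]
    refine integral_congr_ae (.of_forall fun z₀ => ?_)
    have h := hrep z₀ ((phaseEquiv n).symm (z - z₀))
    rw [ContinuousLinearEquiv.apply_symm_apply, sub_add_cancel] at h
    simp only [H, integral_const_mul, ph, ← h]
    ring
  have houter : ∀ p, ∫ z, H z p =
      c p.2 p.1 * wignerMode u v (phaseEquiv n p.1).1 (phaseEquiv n p.1).2 p.2 := fun p => by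
    rw [wignerMode, ← integral_const_mul]
    refine integral_congr_ae (.of_forall fun z => ?_)
    simp only [H, ph, inner_phaseEquiv_symm]
    ring
  have hright : Integrable (fun p => ∫ z, H z p) ν := hHi.integral_prod_right
  simp only [hinner]
  rw [integral_integral_swap hHi, integral_prod _ hright, ← integral_mul_const]
  refine norm_integral_le_of_norm_le (hB.mul_const Q) (.of_forall fun ζ => ?_)
  simp only [houter]
  have hmode := hQi (phaseEquiv n ζ).1 (phaseEquiv n ζ).2
  refine (norm_integral_le_of_norm_le (hmode.restrict.const_mul (B ζ))
    (.of_forall fun z₀ => ?_)).trans ?_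
  · rw [norm_mul]
    exact mul_le_mul_of_nonneg_right (hcB _ _) (norm_nonneg _)
  · rw [integral_const_mul]
    exact mul_le_mul_of_nonneg_left ((setIntegral_le_integral hmode
      (.of_forall fun _ => norm_nonneg _)).trans (hQ _ _)) (hB₀ ζ)

open Filter Topology in
theorem tendsto_integral_localized {n : ℕ} {f : (Fin n → ℝ) × (Fin n → ℝ) → ℂ}
    (hf : Integrable f) {g : (Fin n → ℝ) × (Fin n → ℝ) → ℂ} (hg : Continuous g)
    (hgi : Integrable g) :
    Tendsto (fun k : ℕ => ∫ z, f z * ∫ z₀ in Metric.closedBall 0 (k : ℝ), g (z - z₀)) atTop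
      (𝓝 ((∫ z, f z) * ∫ z, g z)) := by
  have hslice : ∀ z, Integrable fun z₀ => g (z - z₀) := fun z => hgi.comp_sub_left z
  have hbound : ∀ (k : ℕ) z, ‖∫ z₀ in Metric.closedBall 0 (k : ℝ), g (z - z₀)‖ ≤
      ∫ z, ‖g z‖ := fun k z => by
    refine (norm_integral_le_integral_norm _).trans ((setIntegral_le_integral (hslice z).norm
      (.of_forall fun _ => norm_nonneg _)).trans_eq ?_)
    exact integral_sub_left_eq_self (fun w => ‖g w‖) volume z
  rw [← integral_mul_const]
  refine tendsto_integral_of_dominated_convergence (fun z => ‖f z‖ * ∫ z, ‖g z‖) (fun k => ?_)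
    (hf.norm.mul_const _) (fun k => .of_forall fun z => ?_) (.of_forall fun z => ?_)
  · have h : Continuous fun q : ((Fin n → ℝ) × (Fin n → ℝ)) × ((Fin n → ℝ) × (Fin n → ℝ)) =>
        g (q.1 - q.2) := by fun_prop
    exact hf.aestronglyMeasurable.mul
      (h.stronglyMeasurable.integral_prod_right (ν := volume.restrict _)).aestronglyMeasurable
  · rw [norm_mul]
    exact mul_le_mul_of_nonneg_left (hbound k z) (norm_nonneg _)
  · refine Tendsto.const_mul _ ?_
    rw [← integral_sub_left_eq_self g volume z]
    exact (aecover_closedBall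
      tendsto_natCast_atTop_atTop).integral_tendsto_of_countably_generated (hslice z)

/-- Calderón–Vaillancourt theorem (Weyl quantization form): if `a : ℝ^{2n} → ℂ`
is smooth and all its partial derivatives (including `a` itself) are bounded,
then the Weyl operator `Op(a)` is bounded on `L²(ℝⁿ)`:
`|∫ a · W(u,v)| ≤ C ‖u‖_{L²} ‖v‖_{L²}` for all Schwartz `u, v`. -/
theorem calderon_vaillancourt (n : ℕ) (hn : 1 ≤ n)
    (a : (Fin n → ℝ) × (Fin n → ℝ) → ℂ) (ha : ContDiff ℝ (⊤ : ℕ∞) a)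
    (hbd : ∀ L : List (Fin n ⊕ Fin n), ∃ M : ℝ, ∀ z, ‖pDerivList L a z‖ ≤ M) :
    ∃ C > (0 : ℝ), ∀ u v : SchwartzMap (Fin n → ℝ) ℂ,
      ‖∫ z : (Fin n → ℝ) × (Fin n → ℝ), a z * wigner u v z‖ ≤
        C * Real.sqrt (∫ x : Fin n → ℝ, ‖u x‖ ^ 2) *
          Real.sqrt (∫ x : Fin n → ℝ, ‖v x‖ ^ 2) := by
  obtain ⟨χ, hχ, hχc, hχ₁, hκ⟩ := exists_phase_window n
  obtain ⟨c, B, hc, hB, hcB, hrep⟩ := exists_fourier_window_representation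
    (phaseEquiv n : EuclideanSpace ℝ (Fin n ⊕ Fin n) →L[ℝ] _) ha
    (fun k => exists_iteratedFDeriv_bound k a ha hbd) hχ hχc
  obtain ⟨K, hK, hmode⟩ := exists_wignerMode_integral_bound n
  let g : (Fin n → ℝ) × (Fin n → ℝ) → ℂ := fun z =>
    χ ((phaseEquiv n).symm z) * (phaseGauss z : ℂ)
  change 0 < ‖∫ z, g z‖ at hκ
  have hgc : Continuous g := by
    have := hχ.continuous
    have := (phaseEquiv n).symm.continuous
    fun_prop
  have hgi : Integrable g := integrable_phaseGauss.mono' hgc.aestronglyMeasurable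
    (.of_forall fun z => by
      rw [norm_mul, Complex.norm_real, Real.norm_of_nonneg (phaseGauss_pos z).le]
      exact mul_le_of_le_one_left (phaseGauss_pos z).le (hχ₁ _))
  have hBK : 0 ≤ (∫ ζ, B ζ) * K :=
    mul_nonneg (integral_nonneg fun ζ => (norm_nonneg _).trans (hcB 0 ζ)) hK
  refine ⟨(∫ ζ, B ζ) * K / ‖∫ z, g z‖ + 1, by positivity, fun u v => ?_⟩
  set N : ℝ := √(∫ x : Fin n → ℝ, ‖u x‖ ^ 2) * √(∫ x : Fin n → ℝ, ‖v x‖ ^ 2) with hN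
  have hN₀ : 0 ≤ N := by positivity
  rw [mul_assoc, ← hN]
  by_cases hint : Integrable fun z => a z * wigner u v z
  · have hlim := (tendsto_integral_localized hint hgc hgi).norm
    have hle := le_of_tendsto' hlim fun k => norm_integral_localized_le hc hB hcB hrep
      (fun α β => (hmode u v α β).1) (fun α β => (hmode u v α β).2)
      (S := Metric.closedBall 0 (k : ℝ)) measure_closedBall_lt_top
    rw [norm_mul, ← le_div_iff₀ hκ] at hle
    refine hle.trans ?_
    rw [add_mul, one_mul, ← mul_assoc, mul_div_right_comm]
    exact le_add_of_nonneg_right hN₀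
  · rw [integral_undef hint, norm_zero]
    positivity
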